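/- (Action on off-shell Bethe states) For every N ≥ 2, every m ≥ 0 and arbitrary λ₁,…,λ_m ∈ ℂ: Q^(N) ℬ^(N)(λ₁) ℬ^(N)(λ₂) ⋯ ℬ^(N)(λ_m) Ω^(N) = (−1)^N (∏_{i=1}^m d(λᵢ)²) · ℬ^(N−1)(λ₁) ℬ^(N−1)(λ₂) ⋯ ℬ^(N−1)(λ_m) ℬ^(N−1)(η) Ω^(N−1). In particular, if λᵢ = η for some i then the left-hand side vanishes. -/

import Mathlib

noncomputable section
open Complex Matrix

/-- Spin configurations of a chain of `N` sites: `true` encodes `v₊`, `false` encodes `v₋`.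
The site with label `i ∈ {1,…,N}` corresponds to the index `i-1 : Fin N`
(so the leftmost site `N` is the index `N-1`). -/
abbrev Conf (N : ℕ) := Fin N → Bool

/-- The combinatorial-point parameter `η = 2πi/3`. -/
def ηc : ℂ := 2 * (Real.pi : ℂ) * Complex.I / 3

/-- `a(u) = sinh(u+η)/sinh η`. -/
def aF (u : ℂ) : ℂ := Complex.sinh (u + ηc) / Complex.sinh ηc
/-- `b(u) = sinh(u)/sinh η`. -/
def bF (u : ℂ) : ℂ := Complex.sinh u / Complex.sinh ηc
/-- `c(u) = 1`. -/
def cF (_ : ℂ) : ℂ := 1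
/-- `d(u) = sinh(u-η)/sinh η`. -/
def dF (u : ℂ) : ℂ := Complex.sinh (u - ηc) / Complex.sinh ηc
/-- The R-matrix `R(u)` on `V⊗V` in the ordered basis `(v₊⊗v₊, v₊⊗v₋, v₋⊗v₊, v₋⊗v₋)`:
`[[a,0,0,0],[0,b,c,0],[0,c,b,0],[0,0,0,a]]`. -/
def Rm (u : ℂ) : Matrix (Bool × Bool) (Bool × Bool) ℂ :=
  Matrix.of fun o i =>
    if o = i then (if o.1 = o.2 then aF u else bF u)
    else if o.1 = i.2 ∧ o.2 = i.1 ∧ o.1 ≠ o.2 then cF u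
    else 0

/-- The boundary K-matrix `K⁻(u) = diag(d(u), -a(u))` in the basis `(v₊, v₋)`. -/
def Km (u : ℂ) : Matrix Bool Bool ℂ :=
  Matrix.of fun o i => if o = i then (if o then dF u else -aF u) else 0

/-- `R₀ᵢ(u)`: the matrix `R(u)` applied to `V₀ ⊗ Vᵢ` (auxiliary space first), identity
elsewhere, on `V₀ ⊗ V^⊗N`; here the site with label `i` is the index `i-1`. -/
def R0i (N : ℕ) (u : ℂ) (i : Fin N) :
    Matrix (Bool × Conf N) (Bool × Conf N) ℂ :=
  Matrix.of fun x y =>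
    if ∀ j, j ≠ i → x.2 j = y.2 j then Rm u (x.1, x.2 i) (y.1, y.2 i) else 0

/-- `Rᵢ₀(u)`: the matrix `R(u)` applied to `Vᵢ ⊗ V₀` (auxiliary space second), identity
elsewhere, on `V₀ ⊗ V^⊗N`. -/
def Ri0 (N : ℕ) (u : ℂ) (i : Fin N) :
    Matrix (Bool × Conf N) (Bool × Conf N) ℂ :=
  Matrix.of fun x y =>
    if ∀ j, j ≠ i → x.2 j = y.2 j then Rm u (x.2 i, x.1) (y.2 i, y.1) else 0

/-- `T^(N)(u) = R₀₁(u) R₀₂(u) ⋯ R₀N(u)`. -/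
def Tmono (N : ℕ) (u : ℂ) : Matrix (Bool × Conf N) (Bool × Conf N) ℂ :=
  (List.ofFn fun i : Fin N => R0i N u i).prod

/-- `T̄^(N)(u) = R_{N0}(u) ⋯ R_{20}(u) R_{10}(u)`. -/
def Tbar (N : ℕ) (u : ℂ) : Matrix (Bool × Conf N) (Bool × Conf N) ℂ :=
  (List.ofFn fun i : Fin N => Ri0 N u i).reverse.prod

/-- `K₀⁻(u)`: the matrix `K⁻(u)` acting on the auxiliary space `V₀`, identity on `V^⊗N`. -/
def K0m (N : ℕ) (u : ℂ) : Matrix (Bool × Conf N) (Bool × Conf N) ℂ :=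
  Matrix.of fun x y => if x.2 = y.2 then Km u x.1 y.1 else 0

/-- The double-row monodromy matrix `U^(N)(u) = T̄^(N)(u) K₀⁻(u) T^(N)(u)`. -/
def Umono (N : ℕ) (u : ℂ) : Matrix (Bool × Conf N) (Bool × Conf N) ℂ :=
  Tbar N u * K0m N u * Tmono N u

/-- `𝒜^(N)(u)`: the `(v₊, v₊)` auxiliary-space block of `U^(N)(u)`. -/
def Aop (N : ℕ) (u : ℂ) : Matrix (Conf N) (Conf N) ℂ :=
  Matrix.of fun s t => Umono N u (true, s) (true, t)
/-- `ℬ^(N)(u)`: the `(v₊, v₋)` auxiliary-space block of `U^(N)(u)`. -/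
def Bop (N : ℕ) (u : ℂ) : Matrix (Conf N) (Conf N) ℂ :=
  Matrix.of fun s t => Umono N u (true, s) (false, t)
/-- `𝒞^(N)(u)`: the `(v₋, v₊)` auxiliary-space block of `U^(N)(u)`. -/
def Cop (N : ℕ) (u : ℂ) : Matrix (Conf N) (Conf N) ℂ :=
  Matrix.of fun s t => Umono N u (false, s) (true, t)
/-- `𝒟^(N)(u)`: the `(v₋, v₋)` auxiliary-space block of `U^(N)(u)`. -/
def Dop (N : ℕ) (u : ℂ) : Matrix (Conf N) (Conf N) ℂ :=
  Matrix.of fun s t => Umono N u (false, s) (false, t)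

/-- The transfer matrix
`t^(N)(u) = (sinh u / sinh η) 𝒜^(N)(u) - (sinh(u+2η)/sinh η) 𝒟^(N)(u)`. -/
def tOp (N : ℕ) (u : ℂ) : Matrix (Conf N) (Conf N) ℂ :=
  (Complex.sinh u / Complex.sinh ηc) • Aop N u
    - (Complex.sinh (u + 2 * ηc) / Complex.sinh ηc) • Dop N u

/-- The pseudovacuum `Ω^(N) = v₊ ⊗ ⋯ ⊗ v₊`. -/
def Omega (N : ℕ) : Conf N → ℂ := fun s => if ∀ j, s j = true then 1 else 0

/-- `E^ε ⊗ X : V^⊗(n+2) → V^⊗(n+1)`: the linear functional `E^ε : V → ℂ`, `v_ε ↦ 1`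
(zero on the other basis vector), applied to the leftmost site `N = n+2`, tensored with
the operator `X` on the remaining sites `n+1,…,1`.  Here `e = true` encodes `ε = +`. -/
def Etens (n : ℕ) (e : Bool) (X : Matrix (Conf (n + 1)) (Conf (n + 1)) ℂ) :
    Matrix (Conf (n + 1)) (Conf (n + 2)) ℂ :=
  Matrix.of fun o i =>
    (if i (Fin.last (n + 1)) = e then 1 else 0) * X o (fun j => i (Fin.castSucc j))

/-- `F ⊗ X` : the one-site operator `F` applied to the leftmost site `N+1` of a chain of
`N+1` sites, tensored with the operator `X` on the remaining sites `N,…,1`. -/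
def siteTens (N : ℕ) (F : Matrix Bool Bool ℂ) (X : Matrix (Conf N) (Conf N) ℂ) :
    Matrix (Conf (N + 1)) (Conf (N + 1)) ℂ :=
  Matrix.of fun o i =>
    F (o (Fin.last N)) (i (Fin.last N)) * X (fun j => o (Fin.castSucc j)) (fun j => i (Fin.castSucc j))

/-- `E^ε_{ε'} : V → V` sends `v_ε ↦ v_{ε'}` and the other basis vector to `0`
(`true` encodes `+`). -/
def Eop (e e' : Bool) : Matrix Bool Bool ℂ :=
  Matrix.of fun o i => if i = e ∧ o = e' then 1 else 0
/-- The local SUSY generator `q_{i,i+1}` (with `i = k+1`) on a chain of `n+2` sites: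
it applies `q : V⊗V → V`, `q(v₊⊗v₊) = v₋` (zero on the other basis vectors), to the
adjacent sites `i, i+1` (merging them into the single site `i` of the output chain of
`n+1` sites) and the identity to all other sites. -/
def qMerge (n : ℕ) (k : Fin (n + 1)) : Matrix (Conf (n + 1)) (Conf (n + 2)) ℂ :=
  Matrix.of fun o i =>
    if i (Fin.castSucc k) = true ∧ i (Fin.succ k) = true ∧ o k = false ∧
        (∀ j : Fin (n + 1),
          ((j : ℕ) < (k : ℕ) → o j = i (Fin.castSucc j)) ∧
          ((k : ℕ) < (j : ℕ) → o j = i (Fin.succ j)))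
    then 1 else 0

/-- The SUSY operator `Q^(N)` for `N = n+2`:
`Q^(N) = ∑_{i=1}^{N-1} (-1)^{i+1} q_{i,i+1} : V^⊗N → V^⊗(N-1)`. -/
def Qop (n : ℕ) : Matrix (Conf (n + 1)) (Conf (n + 2)) ℂ :=
  ∑ k : Fin (n + 1), ((-1 : ℂ) ^ (k : ℕ)) • qMerge n k

/-- The local operator `q†_i` (with `i = k+1`) on a chain of `n+1` sites: it applies
`q† : V → V⊗V`, `q†(v₋) = v₊⊗v₊`, `q†(v₊) = 0`, to site `i` (splitting it into the two
adjacent sites `i, i+1` of the output chain of `n+2` sites) and the identity elsewhere. -/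
def qSplit (n : ℕ) (k : Fin (n + 1)) : Matrix (Conf (n + 2)) (Conf (n + 1)) ℂ :=
  Matrix.of fun o i =>
    if o (Fin.castSucc k) = true ∧ o (Fin.succ k) = true ∧ i k = false ∧
        (∀ j : Fin (n + 1),
          ((j : ℕ) < (k : ℕ) → i j = o (Fin.castSucc j)) ∧
          ((k : ℕ) < (j : ℕ) → i j = o (Fin.succ j)))
    then 1 else 0

/-- The adjoint SUSY operator `Q^(N)†` for `N = n+2`:
`Q^(N)† = ∑_{i=1}^{N-1} (-1)^{i+1} q†_i : V^⊗(N-1) → V^⊗N`. -/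
def Qdag (n : ℕ) : Matrix (Conf (n + 2)) (Conf (n + 1)) ℂ :=
  ∑ k : Fin (n + 1), ((-1 : ℂ) ^ (k : ℕ)) • qSplit n k

/-!
Write `U^(N)` for the double-row monodromy matrix and split off the leftmost site. Then `U^(N+1)`
is `R_{N0} U^(N) R_{0N}`, whose blocks are explicit combinations of `𝒜, ℬ, 𝒞, 𝒟` on `N` sites,
while `Q` is block triangular: its diagonal blocks are the `Q` of one site fewer, and its only
other block is `± E^+ ⊗ 1`. By induction on the number of sites,
`Q U_{αβ}^(n+1) = d² U_{αβ}^(n) Q + (-1)^(n+1) χ_{αβ}`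
with explicit `χ` such that `χ_{+-} = 0`; the induction closes thanks to `a + b + d = 0` and
`a² + ab + b² = 1`, which is where `η = 2πi/3` enters. The component `+-` says
`Q ℬ = d² ℬ Q`, so `Q` moves through all the `ℬ(λᵢ)`. The same splitting gives
`Q Ω = (-1)^N ℬ(η) Ω`, because `𝒜(η) Ω = 0` and `𝒟(η) Ω = Ω`.
-/

open scoped Kronecker

theorem mul_list_prod_eq_smul {ι m n R : Type*} [Fintype m] [DecidableEq m] [Fintype n]
    [DecidableEq n] [CommSemiring R] {Q : Matrix m n R} {B : ι → Matrix n n R}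
    {C : ι → Matrix m m R} {c : ι → R} (h : ∀ x, Q * B x = c x • (C x * Q)) (L : List ι) :
    Q * (L.map B).prod = (L.map c).prod • ((L.map C).prod * Q) := by
  induction L with
  | nil => simp
  | cons x L ih =>
    simp only [List.map_cons, List.prod_cons]
    calc Q * (B x * (L.map B).prod)
        = c x • (C x * (Q * (L.map B).prod)) := by
          rw [← Matrix.mul_assoc, h, Matrix.smul_mul, Matrix.mul_assoc]
      _ = (c x * (L.map c).prod) • (C x * (L.map C).prod * Q) := by
          rw [ih, Matrix.mul_smul, smul_smul, Matrix.mul_assoc]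

variable {m n N : ℕ}

/-- The `(α, β)` block, with respect to the auxiliary space `V₀`, of an operator on
`V₀ ⊗ V^⊗N`. -/
def auxBlock (M : Matrix (Bool × Conf N) (Bool × Conf N) ℂ) (α β : Bool) :
    Matrix (Conf N) (Conf N) ℂ :=
  M.submatrix (Prod.mk α) (Prod.mk β)

/-- The `(o, i)` block, with respect to the leftmost site, of a linear map
`V^⊗(n+1) → V^⊗(m+1)`. -/
def leftBlock (M : Matrix (Conf (m + 1)) (Conf (n + 1)) ℂ) (o i : Bool) :
    Matrix (Conf m) (Conf n) ℂ :=
  M.submatrix (Fin.snoc (α := fun _ => Bool) · o) (Fin.snoc (α := fun _ => Bool) · i)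

/-- `E^ε ⊗ 1 : V^⊗(n+1) → V^⊗n`, the functional `E^ε` applied to the leftmost site. It is the
identity matrix restricted to the rows whose leftmost spin is `ε`. -/
def leftProj (n : ℕ) (e : Bool) : Matrix (Conf n) (Conf (n + 1)) ℂ :=
  (1 : Matrix (Conf (n + 1)) (Conf (n + 1)) ℂ).submatrix (Fin.snoc (α := fun _ => Bool) · e) id

theorem exists_eq_snoc (s : Conf (N + 1)) :
    ∃ (t : Conf N) (b : Bool), s = Fin.snoc (α := fun _ => Bool) t b :=
  ⟨Fin.init s, s (Fin.last N), (Fin.snoc_init_self s).symm⟩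

theorem sum_conf_succ {M : Type*} [AddCommMonoid M] (f : Conf (N + 1) → M) :
    ∑ s, f s = ∑ b : Bool, ∑ t : Conf N, f (Fin.snoc (α := fun _ => Bool) t b) := by
  rw [← (Fin.snocEquiv fun _ : Fin (N + 1) => Bool).sum_comp, Fintype.sum_prod_type]
  rfl

theorem auxBlock_mul (M M' : Matrix (Bool × Conf N) (Bool × Conf N) ℂ) (α β : Bool) :
    auxBlock (M * M') α β = ∑ γ, auxBlock M α γ * auxBlock M' γ β := by
  ext s t
  simp [auxBlock, Matrix.mul_apply, Fintype.sum_prod_type]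

theorem leftBlock_ext {M M' : Matrix (Conf (m + 1)) (Conf (n + 1)) ℂ}
    (h : ∀ o i, leftBlock M o i = leftBlock M' o i) : M = M' := by
  ext s t
  obtain ⟨s, o, rfl⟩ := exists_eq_snoc s
  obtain ⟨t, i, rfl⟩ := exists_eq_snoc t
  exact congrFun₂ (h o i) s t

theorem leftBlock_mul {l : ℕ} (M : Matrix (Conf (l + 1)) (Conf (m + 1)) ℂ)
    (M' : Matrix (Conf (m + 1)) (Conf (n + 1)) ℂ) (o i : Bool) :
    leftBlock (M * M') o i = ∑ k, leftBlock M o k * leftBlock M' k i := by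
  ext s t
  simp [leftBlock, Matrix.mul_apply, sum_conf_succ]

theorem leftBlock_zero (o i : Bool) :
    leftBlock (0 : Matrix (Conf (m + 1)) (Conf (n + 1)) ℂ) o i = 0 :=
  rfl

theorem leftBlock_add (M M' : Matrix (Conf (m + 1)) (Conf (n + 1)) ℂ) (o i : Bool) :
    leftBlock (M + M') o i = leftBlock M o i + leftBlock M' o i :=
  rfl

theorem leftBlock_smul (c : ℂ) (M : Matrix (Conf (m + 1)) (Conf (n + 1)) ℂ) (o i : Bool) :
    leftBlock (c • M) o i = c • leftBlock M o i :=
  rfl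

theorem leftBlock_sum {ι : Type*} (s : Finset ι)
    (M : ι → Matrix (Conf (m + 1)) (Conf (n + 1)) ℂ) (o i : Bool) :
    leftBlock (∑ k ∈ s, M k) o i = ∑ k ∈ s, leftBlock (M k) o i := by
  ext
  simp [leftBlock, Matrix.sum_apply]

theorem leftProj_mul_apply (M : Matrix (Conf (m + 1)) (Conf n) ℂ) (e : Bool) (s : Conf m)
    (t : Conf n) : (leftProj m e * M) s t = M (Fin.snoc (α := fun _ => Bool) s e) t := by
  simpa [leftProj] using congrFun₂ (Matrix.one_submatrix_mul (Fin.snoc · e) (Equiv.refl _) M) s t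

theorem mul_leftProj_apply_snoc (M : Matrix (Conf m) (Conf n) ℂ) (e i : Bool) (s : Conf m)
    (t : Conf n) :
    (M * leftProj n e) s (Fin.snoc (α := fun _ => Bool) t i) = if i = e then M s t else 0 := by
  by_cases h : i = e <;>
    simp [leftProj, Matrix.mul_apply, Matrix.one_apply, Fin.snoc_inj, h, eq_comm]

theorem leftProj_mul_eq_sum (M : Matrix (Conf (m + 1)) (Conf (n + 1)) ℂ) (o : Bool) :
    leftProj m o * M = ∑ i, leftBlock M o i * leftProj n i := by
  ext s t
  obtain ⟨t, i, rfl⟩ := exists_eq_snoc t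
  simp [Matrix.sum_apply, leftProj_mul_apply, mul_leftProj_apply_snoc, leftBlock]

theorem leftBlock_mul_leftProj (M : Matrix (Conf (m + 1)) (Conf (n + 1)) ℂ) (e o i : Bool) :
    leftBlock (M * leftProj (n + 1) e) o i = if i = e then leftProj m o * M else 0 := by
  ext s t
  by_cases h : i = e <;>
    simp [leftBlock, mul_leftProj_apply_snoc, leftProj_mul_apply, h]

theorem leftProj_mulVec_apply (v : Conf (n + 1) → ℂ) (e : Bool) (s : Conf n) :
    (leftProj n e *ᵥ v) s = v (Fin.snoc (α := fun _ => Bool) s e) := by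
  simp [leftProj, Matrix.mulVec, dotProduct, Matrix.one_apply]

theorem leftProj_mulVec_ext {v w : Conf (n + 1) → ℂ}
    (h : ∀ e, leftProj n e *ᵥ v = leftProj n e *ᵥ w) : v = w := by
  ext s
  obtain ⟨s, e, rfl⟩ := exists_eq_snoc s
  simpa only [leftProj_mulVec_apply] using congrFun (h e) s

/-- `V₀ ⊗ V^⊗(N+1) ≅ (V₀ ⊗ V^⊗N) ⊗ V` on basis vectors, splitting off the leftmost site. -/
def splitLeft (N : ℕ) : Bool × Conf (N + 1) ≃ (Bool × Conf N) × Bool where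
  toFun x := ((x.1, Fin.init x.2), x.2 (Fin.last N))
  invFun y := (y.1.1, Fin.snoc (α := fun _ => Bool) y.1.2 y.2)
  left_inv x := by simp
  right_inv y := by simp

/-- `M ↦ M ⊗ 1`, extending operators on `V₀ ⊗ V^⊗N` by the identity on a new leftmost site. -/
def addSite (N : ℕ) : Matrix (Bool × Conf N) (Bool × Conf N) ℂ →*
    Matrix (Bool × Conf (N + 1)) (Bool × Conf (N + 1)) ℂ where
  toFun M := (M ⊗ₖ (1 : Matrix Bool Bool ℂ)).submatrix (splitLeft N) (splitLeft N)
  map_one' := by rw [Matrix.one_kronecker_one, Matrix.submatrix_one_equiv]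
  map_mul' M M' := by
    rw [Matrix.submatrix_mul_equiv, ← Matrix.mul_kronecker_mul, Matrix.one_mul]

theorem leftBlock_auxBlock_ext {M M' : Matrix (Bool × Conf (N + 1)) (Bool × Conf (N + 1)) ℂ}
    (h : ∀ α β o i, leftBlock (auxBlock M α β) o i = leftBlock (auxBlock M' α β) o i) :
    M = M' := by
  ext ⟨α, s⟩ ⟨β, t⟩
  exact congrFun₂ (leftBlock_ext (h α β)) s t

theorem leftBlock_auxBlock_addSite (M : Matrix (Bool × Conf N) (Bool × Conf N) ℂ)
    (α β o i : Bool) :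
    leftBlock (auxBlock (addSite N M) α β) o i = if o = i then auxBlock M α β else 0 := by
  ext s t
  by_cases h : o = i <;> simp [leftBlock, auxBlock, addSite, splitLeft, h]

theorem forall_ne_last_snoc_eq_iff (s t : Conf N) (o i : Bool) :
    (∀ j, j ≠ Fin.last N →
      Fin.snoc (α := fun _ => Bool) s o j = Fin.snoc (α := fun _ => Bool) t i j) ↔ s = t := by
  simp [Fin.forall_fin_succ', funext_iff]

theorem forall_ne_castSucc_snoc_eq_iff (s t : Conf N) (o i : Bool) (k : Fin N) :
    (∀ j, j ≠ k.castSucc →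
      Fin.snoc (α := fun _ => Bool) s o j = Fin.snoc (α := fun _ => Bool) t i j) ↔
      o = i ∧ ∀ j, j ≠ k → s j = t j := by
  simp [Fin.forall_fin_succ', (Fin.castSucc_ne_last k).symm, and_comm]

theorem R0i_castSucc (N : ℕ) (u : ℂ) (k : Fin N) :
    R0i (N + 1) u k.castSucc = addSite N (R0i N u k) := by
  refine leftBlock_auxBlock_ext fun α β o i => ?_
  rw [leftBlock_auxBlock_addSite]
  ext s t
  by_cases h : o = i <;> simp [leftBlock, auxBlock, R0i, forall_ne_castSucc_snoc_eq_iff, h]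

theorem Ri0_castSucc (N : ℕ) (u : ℂ) (k : Fin N) :
    Ri0 (N + 1) u k.castSucc = addSite N (Ri0 N u k) := by
  refine leftBlock_auxBlock_ext fun α β o i => ?_
  rw [leftBlock_auxBlock_addSite]
  ext s t
  by_cases h : o = i <;> simp [leftBlock, auxBlock, Ri0, forall_ne_castSucc_snoc_eq_iff, h]

theorem K0m_succ (N : ℕ) (u : ℂ) : K0m (N + 1) u = addSite N (K0m N u) := by
  refine leftBlock_auxBlock_ext fun α β o i => ?_
  rw [leftBlock_auxBlock_addSite]
  ext s t
  by_cases h : o = i <;> simp [leftBlock, auxBlock, K0m, Fin.snoc_inj, h]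

theorem leftBlock_auxBlock_R0i_last (N : ℕ) (u : ℂ) (α β o i : Bool) :
    leftBlock (auxBlock (R0i (N + 1) u (Fin.last N)) α β) o i = Rm u (α, o) (β, i) • 1 := by
  ext s t
  simp [leftBlock, auxBlock, R0i, forall_ne_last_snoc_eq_iff, Matrix.one_apply]

theorem leftBlock_auxBlock_Ri0_last (N : ℕ) (u : ℂ) (α β o i : Bool) :
    leftBlock (auxBlock (Ri0 (N + 1) u (Fin.last N)) α β) o i = Rm u (o, α) (i, β) • 1 := by
  ext s t
  simp [leftBlock, auxBlock, Ri0, forall_ne_last_snoc_eq_iff, Matrix.one_apply]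

theorem Tmono_succ (N : ℕ) (u : ℂ) :
    Tmono (N + 1) u = addSite N (Tmono N u) * R0i (N + 1) u (Fin.last N) := by
  rw [Tmono, List.ofFn_succ']
  simp [Tmono, map_list_prod, List.map_ofFn, R0i_castSucc, Function.comp_def]

theorem Tbar_succ (N : ℕ) (u : ℂ) :
    Tbar (N + 1) u = Ri0 (N + 1) u (Fin.last N) * addSite N (Tbar N u) := by
  rw [Tbar, List.ofFn_succ']
  simp [Tbar, map_list_prod, List.map_ofFn, Ri0_castSucc, Function.comp_def]

theorem Umono_succ (N : ℕ) (u : ℂ) :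
    Umono (N + 1) u =
      Ri0 (N + 1) u (Fin.last N) * addSite N (Umono N u) * R0i (N + 1) u (Fin.last N) := by
  simp only [Umono, Tmono_succ, Tbar_succ, K0m_succ, map_mul, Matrix.mul_assoc]

/-- Conjugation `X ↦ R_{N0}(u) X R_{0N}(u)` by a new leftmost site: the `(o, i)` block with
respect to that site of the `(α, β)` auxiliary block, as a combination of the auxiliary blocks
of `X`. The blocks may lie in any module, so that it also applies to `X Q` and `Q X`. -/
def dressing {M : Type*} [AddCommMonoid M] [Module ℂ M] (u : ℂ) (X : Bool → Bool → M)
    (α β o i : Bool) : M :=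
  ∑ γ, ∑ δ, ∑ k, (Rm u (o, α) (k, γ) * Rm u (δ, k) (β, i)) • X γ δ

theorem leftBlock_auxBlock_Umono_succ (N : ℕ) (u : ℂ) (α β o i : Bool) :
    leftBlock (auxBlock (Umono (N + 1) u) α β) o i =
      dressing u (auxBlock (Umono N u)) α β o i := by
  simp only [Umono_succ, auxBlock_mul, leftBlock_mul, leftBlock_sum, leftBlock_auxBlock_addSite,
    leftBlock_auxBlock_R0i_last, leftBlock_auxBlock_Ri0_last, dressing, mul_ite, mul_zero,
    Finset.sum_ite_eq', Finset.mem_univ, if_true, Matrix.smul_mul, Matrix.mul_smul,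
    Matrix.one_mul, Matrix.mul_one]
  simp only [Fintype.sum_bool]
  module

section Dressing

variable {M : Type*} [AddCommGroup M] [Module ℂ M] (u : ℂ) (X : Bool → Bool → M)

theorem dressing_true_true (o i : Bool) :
    dressing u X true true o i = match o, i with
      | true, true => aF u ^ 2 • X true true
      | true, false => aF u • X true false
      | false, true => aF u • X false true
      | false, false => bF u ^ 2 • X true true + X false false := by
  cases o <;> cases i <;> simp [dressing, Rm, cF, pow_two, mul_comm, add_comm]

theorem dressing_true_false (o i : Bool) :
    dressing u X true false o i = match o, i with
      | true, true => (aF u * bF u) • X true false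
      | true, false => 0
      | false, true => bF u • X true true + bF u • X false false
      | false, false => (aF u * bF u) • X true false := by
  cases o <;> cases i <;> simp [dressing, Rm, cF, mul_comm, add_comm]

theorem dressing_false_true (o i : Bool) :
    dressing u X false true o i = match o, i with
      | true, true => (aF u * bF u) • X false true
      | true, false => bF u • X true true + bF u • X false false
      | false, true => 0
      | false, false => (aF u * bF u) • X false true := by
  cases o <;> cases i <;> simp [dressing, Rm, cF, mul_comm, add_comm]

theorem dressing_false_false (o i : Bool) :
    dressing u X false false o i = match o, i with
      | true, true => bF u ^ 2 • X false false + X true true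
      | true, false => aF u • X true false
      | false, true => aF u • X false true
      | false, false => aF u ^ 2 • X false false := by
  cases o <;> cases i <;> simp [dressing, Rm, cF, pow_two, mul_comm, add_comm]

end Dressing

theorem dressing_mul {l m n : ℕ} (u : ℂ) (X : Bool → Bool → Matrix (Conf l) (Conf m) ℂ)
    (Y : Matrix (Conf m) (Conf n) ℂ) (α β o i : Bool) :
    dressing u X α β o i * Y = dressing u (fun γ δ => X γ δ * Y) α β o i := by
  simp [dressing, Matrix.add_mul]

theorem mul_dressing {l m n : ℕ} (u : ℂ) (X : Bool → Bool → Matrix (Conf m) (Conf n) ℂ)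
    (Y : Matrix (Conf l) (Conf m) ℂ) (α β o i : Bool) :
    Y * dressing u X α β o i = dressing u (fun γ δ => Y * X γ δ) α β o i := by
  simp [dressing, Matrix.mul_add]

theorem dressing_add {M : Type*} [AddCommGroup M] [Module ℂ M] (u : ℂ) (X Y : Bool → Bool → M)
    (α β o i : Bool) :
    dressing u (fun γ δ => X γ δ + Y γ δ) α β o i =
      dressing u X α β o i + dressing u Y α β o i := by
  simp only [dressing, smul_add, Finset.sum_add_distrib]

theorem dressing_smul {M : Type*} [AddCommGroup M] [Module ℂ M] (u c : ℂ) (X : Bool → Bool → M)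
    (α β o i : Bool) :
    dressing u (fun γ δ => c • X γ δ) α β o i = c • dressing u X α β o i := by
  simp [dressing, smul_comm c]

theorem auxBlock_Umono_zero (u : ℂ) (α β : Bool) : auxBlock (Umono 0 u) α β = Km u α β • 1 := by
  ext s t
  simp [auxBlock, Umono, Tmono, Tbar, K0m, Subsingleton.elim s t]

theorem two_mul_cosh_ηc : 2 * Complex.cosh ηc = -1 := by
  have hη : ηc = ((Real.pi - Real.pi / 3 : ℝ) : ℂ) * Complex.I := by
    push_cast [ηc]; ring
  rw [hη, Complex.cosh_mul_I, ← Complex.ofReal_cos, Real.cos_pi_sub, Real.cos_pi_div_three]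
  norm_num

theorem sinh_ηc_sq : Complex.sinh ηc ^ 2 = -3 / 4 := by
  linear_combination (2 * Complex.cosh ηc - 1) / 4 * two_mul_cosh_ηc
    - Complex.cosh_sq_sub_sinh_sq ηc

theorem sinh_ηc_ne_zero : Complex.sinh ηc ≠ 0 := by
  have := sinh_ηc_sq
  intro h
  norm_num [h] at this

theorem aF_add_bF_add_dF (u : ℂ) : aF u + bF u + dF u = 0 := by
  rw [aF, bF, dF, Complex.sinh_add, Complex.sinh_sub]
  linear_combination Complex.sinh u / Complex.sinh ηc * two_mul_cosh_ηc

theorem aF_sq_add_aF_mul_bF_add_bF_sq (u : ℂ) : aF u ^ 2 + aF u * bF u + bF u ^ 2 = 1 := by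
  have hC : Complex.cosh ηc = -1 / 2 := by linear_combination two_mul_cosh_ηc / 2
  rw [aF, bF, Complex.sinh_add, hC]
  field_simp [sinh_ηc_ne_zero]
  linear_combination 4 * Complex.sinh ηc ^ 2 * Complex.cosh_sq_sub_sinh_sq u
    + 4 * Complex.sinh u ^ 2 * sinh_ηc_sq

theorem bF_ηc : bF ηc = 1 :=
  div_self sinh_ηc_ne_zero

theorem dF_ηc : dF ηc = 0 := by
  simp [dF]

theorem aF_ηc : aF ηc = -1 := by
  linear_combination aF_add_bF_add_dF ηc - bF_ηc - dF_ηc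

/-- The SUSY operator `Q^(n+1) : V^⊗(n+1) → V^⊗n`, with `Q^(1) = 0`. -/
def susyQ : (n : ℕ) → Matrix (Conf n) (Conf (n + 1)) ℂ
  | 0 => 0
  | n + 1 => Qop n

theorem leftBlock_qMerge_last (n : ℕ) (o i : Bool) :
    leftBlock (qMerge n (Fin.last n)) o i =
      if o = false ∧ i = true then leftProj n true else 0 := by
  ext s t
  obtain ⟨t, b, rfl⟩ := exists_eq_snoc t
  have hlt (k : Fin n) : ¬ n < (k : ℕ) := k.isLt.not_gt
  cases o <;> cases i <;>
    simp [leftBlock, qMerge, leftProj, Fin.forall_fin_succ', Matrix.one_apply, hlt,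
      funext_iff, and_comm]

theorem leftBlock_qMerge_castSucc (n : ℕ) (k : Fin (n + 1)) (o i : Bool) :
    leftBlock (qMerge (n + 1) k.castSucc) o i = if o = i then qMerge n k else 0 := by
  ext s t
  have hk : (k : ℕ) ≤ n := k.is_le
  by_cases h : o = i <;>
    simp [leftBlock, qMerge, Fin.forall_fin_succ' (n := n + 1), Fin.succ_castSucc, h, hk,
      -Fin.castSucc_succ]

theorem leftBlock_susyQ_succ (n : ℕ) (o i : Bool) :
    leftBlock (susyQ (n + 1)) o i = (if o = i then susyQ n else 0) +
      if o = false ∧ i = true then (-1 : ℂ) ^ n • leftProj n true else 0 := by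
  cases n with
  | zero => simpa [susyQ, Qop] using leftBlock_qMerge_last 0 o i
  | succ n =>
    simp only [susyQ, Qop, leftBlock_sum, leftBlock_smul]
    rw [Fin.sum_univ_castSucc]
    by_cases h : o = i <;> simp [leftBlock_qMerge_last, leftBlock_qMerge_castSucc, h]

theorem Aop_eq_auxBlock (N : ℕ) (u : ℂ) : Aop N u = auxBlock (Umono N u) true true := rfl

theorem Bop_eq_auxBlock (N : ℕ) (u : ℂ) : Bop N u = auxBlock (Umono N u) true false := rfl

theorem Cop_eq_auxBlock (N : ℕ) (u : ℂ) : Cop N u = auxBlock (Umono N u) false true := rfl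

theorem Dop_eq_auxBlock (N : ℕ) (u : ℂ) : Dop N u = auxBlock (Umono N u) false false := rfl

/-- The operators `χ_{αβ}` measuring the failure of `Q` to intertwine `U^(n+1)(u)` and
`d(u)² U^(n)(u)`, see `susyQ_mul_auxBlock_Umono`. -/
def exchangeDefect (n : ℕ) (u : ℂ) (α β : Bool) : Matrix (Conf n) (Conf (n + 1)) ℂ :=
  match α, β with
  | true, true => dF u • (Bop n u * leftProj n true)
  | true, false => 0
  | false, true => aF u • (Aop n u * leftProj n true) + dF u • (Dop n u * leftProj n true) +
      Bop n u * leftProj n false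
  | false, false => bF u • (Bop n u * leftProj n true)

theorem exchangeDefect_zero (u : ℂ) (α β : Bool) : exchangeDefect 0 u α β = 0 := by
  have hA : Aop 0 u = dF u • 1 := auxBlock_Umono_zero u true true
  have hB : Bop 0 u = 0 := (auxBlock_Umono_zero u true false).trans (by simp [Km])
  have hD : Dop 0 u = -aF u • 1 := auxBlock_Umono_zero u false false
  cases α <;> cases β <;> simp [exchangeDefect, hA, hB, hD, smul_smul, mul_comm]

/-- The right-hand side is what the `(o, i)` blocks of `Q U_{αβ}` and `d² U_{αβ} Q` leave over once
the exchange relation for one site fewer is inserted, divided by `(-1)^n`. -/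
theorem exchangeDefect_succ (n : ℕ) (u : ℂ) (α β o i : Bool) :
    leftBlock (exchangeDefect (n + 1) u α β) o i =
      (if o = false then
        leftProj n true * leftBlock (auxBlock (Umono (n + 2) u) α β) true i else 0) -
      dressing u (exchangeDefect n u) α β o i -
      (if i = true then
        dF u ^ 2 • (leftBlock (auxBlock (Umono (n + 1) u) α β) o false * leftProj n true)
        else 0) := by
  have hd : dF u = -(aF u + bF u) := by linear_combination aF_add_bF_add_dF u
  have hab := aF_sq_add_aF_mul_bF_add_bF_sq u
  cases α <;> cases β <;> cases o <;> cases i <;>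
    simp only [exchangeDefect, Aop_eq_auxBlock, Bop_eq_auxBlock, Dop_eq_auxBlock, leftBlock_zero,
      leftBlock_add, leftBlock_smul, leftBlock_mul_leftProj, leftProj_mul_eq_sum,
      leftBlock_auxBlock_Umono_succ, dressing_true_true, dressing_true_false,
      dressing_false_true, dressing_false_false, Matrix.add_mul, Matrix.mul_add,
      Matrix.smul_mul, Matrix.mul_smul, Matrix.zero_mul, Matrix.mul_zero, Fintype.sum_bool,
      reduceIte, reduceCtorEq] <;>
    match_scalars <;> grind

theorem susyQ_mul_auxBlock_Umono (n : ℕ) (u : ℂ) (α β : Bool) :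
    susyQ n * auxBlock (Umono (n + 1) u) α β =
      dF u ^ 2 • (auxBlock (Umono n u) α β * susyQ n) +
        (-1 : ℂ) ^ (n + 1) • exchangeDefect n u α β := by
  induction n generalizing α β with
  | zero => simp [susyQ, exchangeDefect_zero]
  | succ n ih =>
    refine leftBlock_ext fun o i => ?_
    have hQU : susyQ n * leftBlock (auxBlock (Umono (n + 2) u) α β) o i =
        dF u ^ 2 • (leftBlock (auxBlock (Umono (n + 1) u) α β) o i * susyQ n) +
          (-1 : ℂ) ^ (n + 1) • dressing u (exchangeDefect n u) α β o i := by
      simp only [leftBlock_auxBlock_Umono_succ _ _ α β, mul_dressing, dressing_mul, ih,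
        dressing_add, dressing_smul]
    simp only [leftBlock_mul, leftBlock_add, leftBlock_smul, leftBlock_susyQ_succ,
      exchangeDefect_succ]
    cases o <;> cases i <;> simp [Matrix.add_mul, Matrix.mul_add, hQU, pow_succ] <;> module

theorem susyQ_mul_Bop (n : ℕ) (u : ℂ) :
    susyQ n * Bop (n + 1) u = dF u ^ 2 • (Bop n u * susyQ n) := by
  simpa [Bop_eq_auxBlock, exchangeDefect] using susyQ_mul_auxBlock_Umono n u true false

theorem leftProj_mulVec_Omega (n : ℕ) (e : Bool) :
    leftProj n e *ᵥ Omega (n + 1) = if e = true then Omega n else 0 := by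
  ext s
  cases e <;> simp [leftProj_mulVec_apply, Omega, Fin.forall_fin_succ']

theorem leftProj_mul_mulVec_Omega (M : Matrix (Conf (m + 1)) (Conf (n + 1)) ℂ) (o : Bool) :
    (leftProj m o * M) *ᵥ Omega (n + 1) = leftBlock M o true *ᵥ Omega n := by
  simp only [leftProj_mul_eq_sum, Fintype.sum_bool, Matrix.add_mulVec, ← Matrix.mulVec_mulVec,
    leftProj_mulVec_Omega]
  simp

theorem Cop_mulVec_Omega (N : ℕ) (u : ℂ) : Cop N u *ᵥ Omega N = 0 := by
  induction N with
  | zero => simp [Cop_eq_auxBlock, auxBlock_Umono_zero, Km]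
  | succ N ih =>
    rw [Cop_eq_auxBlock] at ih ⊢
    refine leftProj_mulVec_ext fun o => ?_
    cases o <;> simp [leftProj_mul_mulVec_Omega, leftBlock_auxBlock_Umono_succ,
      dressing_false_true, Matrix.smul_mulVec, ih]

theorem Aop_mulVec_Omega (N : ℕ) (u : ℂ) :
    Aop N u *ᵥ Omega N = (dF u * aF u ^ (2 * N)) • Omega N := by
  have hC (N) := Cop_mulVec_Omega N u
  simp only [Cop_eq_auxBlock, Aop_eq_auxBlock] at hC ⊢
  induction N with
  | zero => simp [auxBlock_Umono_zero, Km, Matrix.smul_mulVec]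
  | succ N ih =>
    refine leftProj_mulVec_ext fun o => ?_
    cases o <;> simp [leftProj_mul_mulVec_Omega, leftBlock_auxBlock_Umono_succ,
      dressing_true_true, Matrix.smul_mulVec, Matrix.mulVec_smul, leftProj_mulVec_Omega, ih, hC]
    module

theorem Dop_ηc_mulVec_Omega (N : ℕ) : Dop N ηc *ᵥ Omega N = Omega N := by
  have hA (N) : Aop N ηc *ᵥ Omega N = 0 := by simp [Aop_mulVec_Omega, dF_ηc]
  have hC (N) := Cop_mulVec_Omega N ηc
  simp only [Aop_eq_auxBlock, Cop_eq_auxBlock, Dop_eq_auxBlock] at hA hC ⊢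
  induction N with
  | zero => simp [auxBlock_Umono_zero, Km, aF_ηc]
  | succ N ih =>
    refine leftProj_mulVec_ext fun o => ?_
    cases o <;> simp [leftProj_mul_mulVec_Omega, leftBlock_auxBlock_Umono_succ,
      dressing_false_false, Matrix.add_mulVec, Matrix.smul_mulVec, leftProj_mulVec_Omega, bF_ηc,
      ih, hA, hC]

theorem susyQ_mulVec_Omega (n : ℕ) :
    susyQ n *ᵥ Omega (n + 1) = (-1 : ℂ) ^ (n + 1) • (Bop n ηc *ᵥ Omega n) := by
  have hA (N) : Aop N ηc *ᵥ Omega N = 0 := by simp [Aop_mulVec_Omega, dF_ηc]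
  have hD := Dop_ηc_mulVec_Omega
  simp only [Aop_eq_auxBlock, Bop_eq_auxBlock, Dop_eq_auxBlock] at hA hD ⊢
  induction n with
  | zero => simp [susyQ, auxBlock_Umono_zero, Km]
  | succ n ih =>
    refine leftProj_mulVec_ext fun o => ?_
    cases o <;> simp [leftProj_mul_mulVec_Omega, leftBlock_susyQ_succ,
      leftBlock_auxBlock_Umono_succ, dressing_true_false, Matrix.add_mulVec, Matrix.smul_mulVec,
      Matrix.neg_mulVec, Matrix.mulVec_smul, leftProj_mulVec_Omega, aF_ηc, bF_ηc, pow_succ, ih,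
      hA, hD]

theorem susyQ_mulVec_prod_Bop_mulVec_Omega (n : ℕ) (L : List ℂ) :
    susyQ n *ᵥ ((L.map (Bop (n + 1))).prod *ᵥ Omega (n + 1)) =
      ((-1 : ℂ) ^ (n + 1) * (L.map fun u => dF u ^ 2).prod) •
        ((L.map (Bop n)).prod * Bop n ηc) *ᵥ Omega n := by
  rw [Matrix.mulVec_mulVec, mul_list_prod_eq_smul (susyQ_mul_Bop n), Matrix.smul_mulVec,
    ← Matrix.mulVec_mulVec, susyQ_mulVec_Omega, Matrix.mulVec_smul, Matrix.mulVec_mulVec,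
    smul_smul, mul_comm]

/-- action on off-shell Bethe states: for every `N = n+2 ≥ 2`, `m ≥ 0` and
`λ₁,…,λ_m ∈ ℂ`,
`Q^(N) ℬ^(N)(λ₁)⋯ℬ^(N)(λ_m) Ω^(N)
  = (-1)^N (∏ᵢ d(λᵢ)²) ℬ^(N-1)(λ₁)⋯ℬ^(N-1)(λ_m) ℬ^(N-1)(η) Ω^(N-1)`;
in particular if some `λᵢ = η` then the left-hand side vanishes (`Qop n = Q^(n+2)`). -/
theorem Q_offshell_Bethe (n m : ℕ) (lam : Fin m → ℂ) :
    (Qop n).mulVec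
        ((List.ofFn fun i => Bop (n + 2) (lam i)).prod.mulVec (Omega (n + 2)))
      = ((-1 : ℂ) ^ (n + 2) * ∏ i, dF (lam i) ^ 2) •
          ((List.ofFn fun i => Bop (n + 1) (lam i)).prod * Bop (n + 1) ηc).mulVec
            (Omega (n + 1))
    ∧ ((∃ i, lam i = ηc) →
        (Qop n).mulVec
            ((List.ofFn fun i => Bop (n + 2) (lam i)).prod.mulVec (Omega (n + 2))) = 0) := by
  have action := susyQ_mulVec_prod_Bop_mulVec_Omega (n + 1) (List.ofFn lam)
  simp only [List.map_ofFn, List.prod_ofFn (f := (fun u => dF u ^ 2) ∘ lam)] at action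
  refine ⟨action, fun ⟨i, hi⟩ => action.trans ?_⟩
  have hd : ∏ i, dF (lam i) ^ 2 = 0 :=
    Finset.prod_eq_zero (Finset.mem_univ i) (by simp [hi, dF_ηc])
  simp only [Function.comp_apply, hd, mul_zero, zero_smul]
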